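/- arXiv:1810.09129 — 2 statements merged into one kernel-verified Lean document; each statement's English description precedes it below -/
import Mathlib

section
/- Let H(m,n) be the special Heisenberg Lie superalgebra with even center of dimension (2m+1 | n) over a field of characteristic ≠ 2,3. Then dim M(H(m,n)) = 2m² - m - 1 + 2mn + n(n+1)/2 if m+n ≥ 2; dim M(H(0,1)) = 0; and dim M(H(1,0)) = 2. -/
open Module Function TensorProduct

/-- A Lie superalgebra over a field `K`, encoded via a grading involution `J`
(the even part is the `+1`-eigenspace, the odd part the `-1`-eigenspace),
a bilinear bracket `br` satisfying graded skew-symmetry and the graded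
Jacobi identity on homogeneous elements. -/
structure SuperLie (K : Type) [Field K] : Type 1 where
  carrier : Type
  [acg : AddCommGroup carrier]
  [mod : Module K carrier]
  J : carrier →ₗ[K] carrier
  br : carrier →ₗ[K] carrier →ₗ[K] carrier
  J_inv : ∀ x, J (J x) = x
  J_br : ∀ x y, J (br x y) = br (J x) (J y)
  skew_e : ∀ x y, J x = x → br x y = - br y x
  skew_o : ∀ x y, J x = -x → J y = -y → br x y = br y x
  jacobi : ∀ (a b c : Bool) (x y z : carrier),
    J x = (if a then -x else x) → J y = (if b then -y else y) →
    J z = (if c then -z else z) →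
    (if a && c then (-1 : K) else 1) • br x (br y z)
      + (if b && a then (-1 : K) else 1) • br y (br z x)
      + (if c && b then (-1 : K) else 1) • br z (br x y) = 0

attribute [instance] SuperLie.acg SuperLie.mod

namespace SuperLie

variable {K : Type} [Field K]

/-- The even part `L₀`. -/
def evenPart (A : SuperLie K) : Submodule K A.carrier :=
  LinearMap.ker (A.J - LinearMap.id)

/-- The odd part `L₁`. -/
def oddPart (A : SuperLie K) : Submodule K A.carrier :=
  LinearMap.ker (A.J + LinearMap.id)

/-- The center `Z(L) = {z | [z,x] = 0 for all x}`. -/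
def center (A : SuperLie K) : Submodule K A.carrier :=
  ⨅ y, LinearMap.ker (A.br.flip y)

/-- The derived subalgebra `L' = [L,L]`. -/
def derived (A : SuperLie K) : Submodule K A.carrier :=
  Submodule.span K {z | ∃ x y, A.br x y = z}

/-- The descending central series `C⁰(L) = L`, `C^{k+1}(L) = [C^k(L), L]`. -/
def lcs (A : SuperLie K) : ℕ → Submodule K A.carrier
  | 0 => ⊤
  | (k+1) => Submodule.span K {z | ∃ x ∈ lcs A k, ∃ y, A.br x y = z}

/-- The second center `Z₂(L)`: those `x` with `[x,y] ∈ Z(L)` for all `y`. -/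
def Z2 (A : SuperLie K) : Submodule K A.carrier :=
  ⨅ y, Submodule.comap (A.br.flip y) A.center

/-- Nilpotency: the descending central series terminates at zero. -/
def IsNilpotent (A : SuperLie K) : Prop := ∃ k, A.lcs k = ⊥

/-- Abelian: identically vanishing bracket. -/
def IsAbelian (A : SuperLie K) : Prop := ∀ x y, A.br x y = 0

/-- A homomorphism of Lie superalgebras: an even linear map commuting with the
grading and preserving brackets. -/
structure Hom (A B : SuperLie K) where
  toLin : A.carrier →ₗ[K] B.carrier
  map_J : ∀ x, toLin (A.J x) = B.J (toLin x)
  map_br : ∀ x y, toLin (A.br x y) = B.br (toLin x) (toLin y)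

/-- The dimension of the Schur multiplier `M(A)`, characterized as the maximal
dimension of the kernel of a stem extension `0 → M → B → A → 0`
(i.e. `M = ker f ⊆ Z(B) ∩ B'`); a stem extension of maximal dimension is a
stem cover, whose kernel is isomorphic to the Schur multiplier
`M(A) = ([F,F] ∩ R)/[F,R]` coming from any free presentation `0 → R → F → A → 0`. -/
noncomputable def multDim (A : SuperLie K) : ℕ :=
  sSup {d | ∃ (B : SuperLie K) (f : Hom B A),
    Surjective f.toLin ∧
    LinearMap.ker f.toLin ≤ B.center ⊓ B.derived ∧
    finrank K (LinearMap.ker f.toLin) = d}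

/-- `A ≅ H(0,1)`: basis `z` (even), `y` (odd), `[y,y] = z`, `z` central. -/
def IsH01 (A : SuperLie K) : Prop :=
  ∃ z y : A.carrier, z ∈ A.evenPart ∧ y ∈ A.oddPart ∧
    LinearIndependent K ![z, y] ∧
    Submodule.span K ({z, y} : Set A.carrier) = ⊤ ∧
    A.br y y = z ∧ z ∈ A.center

/-- `A ≅ H(1,0)`: the purely even 3-dimensional Heisenberg algebra. -/
def IsH10 (A : SuperLie K) : Prop :=
  ∃ x y z : A.carrier, x ∈ A.evenPart ∧ y ∈ A.evenPart ∧ z ∈ A.evenPart ∧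
    LinearIndependent K ![x, y, z] ∧
    Submodule.span K ({x, y, z} : Set A.carrier) = ⊤ ∧
    A.br x y = z ∧ z ∈ A.center

/-- `A ≅ H(0,2)`: even basis `{z}`, odd basis `{y₁,y₂}`, `[yᵢ,yᵢ] = z`. -/
def IsH02 (A : SuperLie K) : Prop :=
  ∃ z y₁ y₂ : A.carrier, z ∈ A.evenPart ∧ y₁ ∈ A.oddPart ∧ y₂ ∈ A.oddPart ∧
    LinearIndependent K ![z, y₁, y₂] ∧
    Submodule.span K ({z, y₁, y₂} : Set A.carrier) = ⊤ ∧
    A.br y₁ y₁ = z ∧ A.br y₂ y₂ = z ∧ A.br y₁ y₂ = 0 ∧ z ∈ A.center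

/-- `A ≅ H₁`: even basis `{x}`, odd basis `{y,z}`, `[x,y] = z`, `z` central. -/
def IsHodd1 (A : SuperLie K) : Prop :=
  ∃ x y z : A.carrier, x ∈ A.evenPart ∧ y ∈ A.oddPart ∧ z ∈ A.oddPart ∧
    LinearIndependent K ![x, y, z] ∧
    Submodule.span K ({x, y, z} : Set A.carrier) = ⊤ ∧
    A.br x y = z ∧ A.br y y = 0 ∧ z ∈ A.center

/-- `A ≅ H(p,q)`: the special Heisenberg Lie superalgebra with even center,
of superdimension `(2p+1 | q)`: even basis `x₁,…,x_{2p}, z` with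
`[xᵢ, x_{p+i}] = z`, odd basis `y₁,…,y_q` with `[yⱼ,yⱼ] = z`, `z` central. -/
def IsHeisEven (A : SuperLie K) (p q : ℕ) : Prop :=
  ∃ (x : Fin (2*p) → A.carrier) (y : Fin q → A.carrier) (z : A.carrier),
    (∀ i, x i ∈ A.evenPart) ∧ (∀ j, y j ∈ A.oddPart) ∧ z ∈ A.evenPart ∧
    LinearIndependent K (Sum.elim x (Sum.elim y (fun _ : Fin 1 => z))) ∧
    Submodule.span K (Set.range (Sum.elim x (Sum.elim y (fun _ : Fin 1 => z)))) = ⊤ ∧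
    (∀ i j : Fin (2*p), A.br (x i) (x j) =
      if (j : ℕ) = (i : ℕ) + p then z else if (i : ℕ) = (j : ℕ) + p then -z else 0) ∧
    (∀ i j : Fin q, A.br (y i) (y j) = if i = j then z else 0) ∧
    (∀ i j, A.br (x i) (y j) = 0) ∧ z ∈ A.center

/-- `A ≅ H_p`: the special Heisenberg Lie superalgebra with odd center, of
superdimension `(p | p+1)`: even basis `x₁,…,x_p`, odd basis `y₁,…,y_p, z`,
with `[xᵢ, yᵢ] = z` and `z` central. -/
def IsHeisOdd (A : SuperLie K) (p : ℕ) : Prop :=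
  ∃ (x : Fin p → A.carrier) (y : Fin p → A.carrier) (z : A.carrier),
    (∀ i, x i ∈ A.evenPart) ∧ (∀ j, y j ∈ A.oddPart) ∧ z ∈ A.oddPart ∧
    LinearIndependent K (Sum.elim x (Sum.elim y (fun _ : Fin 1 => z))) ∧
    Submodule.span K (Set.range (Sum.elim x (Sum.elim y (fun _ : Fin 1 => z)))) = ⊤ ∧
    (∀ i j : Fin p, A.br (x i) (x j) = 0) ∧
    (∀ i j : Fin p, A.br (y i) (y j) = 0) ∧
    (∀ i j : Fin p, A.br (x i) (y j) = if i = j then z else 0) ∧ z ∈ A.center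

/-- `A ≅ H(p,q) ⊕ A(a|b)`: direct sum of the special Heisenberg Lie
superalgebra with even center and an abelian superalgebra of superdimension
`(a|b)` (central basis vectors `u₁,…,u_a` even and `v₁,…,v_b` odd). -/
def IsHeisEvenSum (A : SuperLie K) (p q a b : ℕ) : Prop :=
  ∃ (x : Fin (2*p) → A.carrier) (y : Fin q → A.carrier) (z : A.carrier)
    (u : Fin a → A.carrier) (v : Fin b → A.carrier),
    (∀ i, x i ∈ A.evenPart) ∧ (∀ j, y j ∈ A.oddPart) ∧ z ∈ A.evenPart ∧
    (∀ i, u i ∈ A.evenPart) ∧ (∀ j, v j ∈ A.oddPart) ∧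
    LinearIndependent K
      (Sum.elim x (Sum.elim y (Sum.elim (fun _ : Fin 1 => z) (Sum.elim u v)))) ∧
    Submodule.span K (Set.range
      (Sum.elim x (Sum.elim y (Sum.elim (fun _ : Fin 1 => z) (Sum.elim u v))))) = ⊤ ∧
    (∀ i j : Fin (2*p), A.br (x i) (x j) =
      if (j : ℕ) = (i : ℕ) + p then z else if (i : ℕ) = (j : ℕ) + p then -z else 0) ∧
    (∀ i j : Fin q, A.br (y i) (y j) = if i = j then z else 0) ∧
    (∀ i j, A.br (x i) (y j) = 0) ∧ z ∈ A.center ∧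
    (∀ i, u i ∈ A.center) ∧ (∀ j, v j ∈ A.center)

/-- `A ≅ H_p ⊕ A(a|b)`: direct sum of the special Heisenberg Lie superalgebra
with odd center and an abelian superalgebra of superdimension `(a|b)`. -/
def IsHeisOddSum (A : SuperLie K) (p a b : ℕ) : Prop :=
  ∃ (x : Fin p → A.carrier) (y : Fin p → A.carrier) (z : A.carrier)
    (u : Fin a → A.carrier) (v : Fin b → A.carrier),
    (∀ i, x i ∈ A.evenPart) ∧ (∀ j, y j ∈ A.oddPart) ∧ z ∈ A.oddPart ∧
    (∀ i, u i ∈ A.evenPart) ∧ (∀ j, v j ∈ A.oddPart) ∧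
    LinearIndependent K
      (Sum.elim x (Sum.elim y (Sum.elim (fun _ : Fin 1 => z) (Sum.elim u v)))) ∧
    Submodule.span K (Set.range
      (Sum.elim x (Sum.elim y (Sum.elim (fun _ : Fin 1 => z) (Sum.elim u v))))) = ⊤ ∧
    (∀ i j : Fin p, A.br (x i) (x j) = 0) ∧
    (∀ i j : Fin p, A.br (y i) (y j) = 0) ∧
    (∀ i j : Fin p, A.br (x i) (y j) = if i = j then z else 0) ∧ z ∈ A.center ∧
    (∀ i, u i ∈ A.center) ∧ (∀ j, v j ∈ A.center)

/-- `A ≅ L_{4,0}`: purely even filiform algebra, basis `x,y,z,w`,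
`[x,y] = z`, `[y,z] = w`, all other basis brackets zero. -/
def IsL40 (A : SuperLie K) : Prop :=
  ∃ x y z w : A.carrier,
    x ∈ A.evenPart ∧ y ∈ A.evenPart ∧ z ∈ A.evenPart ∧ w ∈ A.evenPart ∧
    LinearIndependent K ![x, y, z, w] ∧
    Submodule.span K ({x, y, z, w} : Set A.carrier) = ⊤ ∧
    A.br x y = z ∧ A.br y z = w ∧ A.br x z = 0 ∧
    A.br x w = 0 ∧ A.br y w = 0 ∧ A.br z w = 0

/-- `A ≅ L_{5,0}^2`: purely even, basis `x,y,z,v,w`, `[x,y] = v`, `[y,z] = w`,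
with `v, w` central and all other basis brackets zero. -/
def IsL502 (A : SuperLie K) : Prop :=
  ∃ x y z v w : A.carrier,
    x ∈ A.evenPart ∧ y ∈ A.evenPart ∧ z ∈ A.evenPart ∧
    v ∈ A.evenPart ∧ w ∈ A.evenPart ∧
    LinearIndependent K ![x, y, z, v, w] ∧
    Submodule.span K ({x, y, z, v, w} : Set A.carrier) = ⊤ ∧
    A.br x y = v ∧ A.br y z = w ∧ A.br x z = 0 ∧
    v ∈ A.center ∧ w ∈ A.center

end SuperLie

open SuperLie
namespace SuperLie

section aux
variable {K : Type} [Field K]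

lemma mem_center_iff (A : SuperLie K) (z : A.carrier) :
    z ∈ A.center ↔ ∀ x, A.br z x = 0 := by
  simp [center, Submodule.mem_iInf]

lemma br_right_zero (h2 : (2 : K) ≠ 0) (A : SuperLie K) {z : A.carrier}
    (hz : ∀ x, A.br z x = 0) (x : A.carrier) : A.br x z = 0 := by
  have hJ : ∀ x, A.br (A.J z) x = 0 := by
    intro x
    have := A.J_br z (A.J x)
    rw [hz, A.J_inv, map_zero] at this
    exact this.symm
  have dec : ∀ t : A.carrier, t = (2⁻¹ : K) • (t + A.J t) + (2⁻¹ : K) • (t - A.J t) := by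
    intro t
    rw [← smul_add, add_add_sub_cancel, ← two_smul K t, smul_smul, inv_mul_cancel₀ h2, one_smul]
  have he : ∀ t : A.carrier, A.J ((2⁻¹ : K) • (t + A.J t)) = (2⁻¹ : K) • (t + A.J t) := by
    intro t; rw [map_smul, map_add, A.J_inv, add_comm]
  have ho : ∀ t : A.carrier, A.J ((2⁻¹ : K) • (t - A.J t)) = -((2⁻¹ : K) • (t - A.J t)) := by
    intro t; rw [map_smul, map_sub, A.J_inv, ← smul_neg, neg_sub]
  have h1 : A.br ((2⁻¹ : K) • (x + A.J x)) z = 0 := by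
    rw [A.skew_e _ _ (he x), hz, neg_zero]
  have h3 : A.br ((2⁻¹ : K) • (x - A.J x)) ((2⁻¹ : K) • (z + A.J z)) = 0 := by
    have := A.skew_e _ ((2⁻¹ : K) • (x - A.J x)) (he z)
    have h4 : A.br ((2⁻¹ : K) • (z + A.J z)) ((2⁻¹ : K) • (x - A.J x)) = 0 := by
      simp [hz, hJ]
    rw [h4] at this
    exact neg_eq_zero.mp this.symm
  have h5 : A.br ((2⁻¹ : K) • (x - A.J x)) ((2⁻¹ : K) • (z - A.J z)) = 0 := by
    rw [A.skew_o _ _ (ho x) (ho z)]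
    simp [hz, hJ]
  rw [dec x, map_add, LinearMap.add_apply, h1, zero_add]
  conv_lhs => rw [dec z]
  rw [map_add, h3, h5, add_zero]

/-- homogeneous lifts -/
lemma exists_lift (h2 : (2 : K) ≠ 0) {A B : SuperLie K} (f : Hom B A)
    (hf : Surjective f.toLin) (a : Bool) (b : A.carrier)
    (hb : A.J b = if a then -b else b) :
    ∃ t : B.carrier, f.toLin t = b ∧ B.J t = if a then -t else t := by
  obtain ⟨t, rfl⟩ := hf b
  have hh : ∀ u : A.carrier, (2⁻¹ : K) • (u + u) = u := fun u => by
    rw [← two_smul K u, smul_smul, inv_mul_cancel₀ h2, one_smul]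
  cases a
  · refine ⟨(2⁻¹ : K) • (t + B.J t), ?_, ?_⟩
    · simp only [Bool.false_eq_true, if_false] at hb
      rw [map_smul, map_add, f.map_J, hb, hh]
    · simp [B.J_inv, add_comm]
  · refine ⟨(2⁻¹ : K) • (t - B.J t), ?_, ?_⟩
    · simp only [if_true] at hb
      rw [map_smul, map_sub, f.map_J, hb, sub_neg_eq_add, hh]
    · simp [B.J_inv, ← smul_neg]

lemma derived_le (h2 : (2 : K) ≠ 0) {A B : SuperLie K} (f : Hom B A)
    (hk : LinearMap.ker f.toLin ≤ B.center) {κ : Type} (g : κ → B.carrier)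
    (hg : Submodule.span K (Set.range (fun i => f.toLin (g i))) = ⊤)
    (D : Submodule K B.carrier) (hD : ∀ i j, B.br (g i) (g j) ∈ D) : B.derived ≤ D := by
  have key : ∀ x : B.carrier, ∃ u ∈ Submodule.span K (Set.range g), x - u ∈ B.center := by
    intro x
    have hx : f.toLin x ∈ Submodule.span K (Set.range (fun i => f.toLin (g i))) := by
      rw [hg]; trivial
    have : Set.range (fun i => f.toLin (g i)) = f.toLin '' Set.range g := by
      rw [← Set.range_comp]; rfl
    rw [this, Submodule.span_image] at hx
    obtain ⟨u, hu, hux⟩ := hx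
    exact ⟨u, hu, hk (by simp [hux])⟩
  have sp : ∀ u ∈ Submodule.span K (Set.range g), ∀ v ∈ Submodule.span K (Set.range g),
      B.br u v ∈ D := by
    intro u hu v hv
    induction hu using Submodule.span_induction with
    | mem u hu =>
      obtain ⟨i, rfl⟩ := hu
      induction hv using Submodule.span_induction with
      | mem v hv => obtain ⟨j, rfl⟩ := hv; exact hD i j
      | zero => simp
      | add a b _ _ ha hb => rw [map_add]; exact D.add_mem ha hb
      | smul c a _ ha => rw [map_smul]; exact D.smul_mem _ ha
    | zero => simp
    | add a b _ _ ha hb => rw [map_add, LinearMap.add_apply]; exact D.add_mem ha hb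
    | smul c a _ ha => rw [map_smul, LinearMap.smul_apply]; exact D.smul_mem _ ha
  unfold derived
  rw [Submodule.span_le]
  rintro _ ⟨x, y, rfl⟩
  obtain ⟨u, hu, hxu⟩ := key x
  obtain ⟨v, hv, hyv⟩ := key y
  rw [mem_center_iff] at hxu hyv
  have h1 := hxu y
  have h3 := br_right_zero h2 B hyv u
  rw [map_sub, LinearMap.sub_apply, sub_eq_zero] at h1
  rw [map_sub, sub_eq_zero] at h3
  show B.br x y ∈ D
  rw [h1, h3]
  exact sp u hu v hv

lemma finrank_ker_lt {A B : SuperLie K} (f : Hom B A) (D : Submodule K B.carrier)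
    [FiniteDimensional K D] (h : LinearMap.ker f.toLin ≤ D) (d : B.carrier) (hd : d ∈ D)
    (hfd : f.toLin d ≠ 0) : finrank K (LinearMap.ker f.toLin) < finrank K D := by
  apply Submodule.finrank_lt_finrank_of_lt
  refine lt_of_le_of_ne h ?_
  intro he
  rw [← he] at hd
  exact hfd hd

/-- sign -/
def sg (a b : Bool) : K := if a && b then -1 else 1

lemma sg_comm (a b : Bool) : (sg a b : K) = sg b a := by cases a <;> cases b <;> rfl
lemma sg_sq (a b : Bool) : (sg a b : K) * sg a b = 1 := by
  cases a <;> cases b <;> simp [sg]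

variable {ι : Type}

/-- super skew matrices -/
def WW (K : Type) [Field K] (par : ι → Bool) : Submodule K (ι → ι → K) where
  carrier := {w | ∀ i j, w i j = -(sg (par i) (par j) * w j i)}
  add_mem' := by
    intro a b ha hb i j
    simp only [Pi.add_apply]
    rw [ha i j, hb i j]; ring
  zero_mem' := by intro i j; simp
  smul_mem' := by
    intro c a ha i j
    simp only [Pi.smul_apply, smul_eq_mul]
    rw [ha i j]; ring

lemma WW_mem (par : ι → Bool) (w : WW K par) (i j : ι) :
    w.1 i j = -(sg (par i) (par j) * w.1 j i) := w.2 i j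

def phi [Fintype ι] (B : SuperLie K) (par : ι → Bool) (β : ι → B.carrier) :
    WW K par →ₗ[K] B.carrier where
  toFun w := ∑ i, ∑ j, (2⁻¹ * w.1 i j) • B.br (β i) (β j)
  map_add' := by
    intro a b
    simp [mul_add, add_smul, Finset.sum_add_distrib]
  map_smul' := by
    intro c a
    simp only [Finset.smul_sum, smul_smul]
    refine Finset.sum_congr rfl fun i _ => Finset.sum_congr rfl fun j _ => ?_
    simp; congr 1; ring

def wbr (par : ι → Bool) : (ι → K) →ₗ[K] (ι → K) →ₗ[K] WW K par :=
  LinearMap.mk₂ K (fun v v' => ⟨fun i j => v i * v' j - sg (par i) (par j) * (v j * v' i), by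
      intro i j
      have := sg_sq (K := K) (par i) (par j)
      show _ = -(_ * (_ - _))
      rw [sg_comm (par j) (par i)]
      linear_combination (-(v i * v' j)) * this⟩)
    (by intros; ext i j; simp; ring) (by intros; ext i j; simp; ring)
    (by intros; ext i j; simp; ring) (by intros; ext i j; simp; ring)

lemma wbr_apply (par : ι → Bool) (v v' : ι → K) (i j : ι) :
    (wbr par v v').1 i j = v i * v' j - sg (par i) (par j) * (v j * v' i) := rfl

lemma skew_par (B : SuperLie K) (a b : Bool) (x y : B.carrier)
    (hx : B.J x = if a then -x else x) (hy : B.J y = if b then -y else y) :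
    B.br x y = -((sg a b : K) • B.br y x) := by
  cases a
  · simp at hx; simp [sg, B.skew_e x y hx]
  · cases b
    · simp at hy; simp [sg, B.skew_e y x hy]
    · simp at hx hy; simp [sg, B.skew_o x y hx hy]

lemma phi_wbr [Fintype ι] (h2 : (2 : K) ≠ 0) (B : SuperLie K) (par : ι → Bool) (β : ι → B.carrier)
    (hβ : ∀ i, B.J (β i) = if par i then -β i else β i) (v v' : ι → K) :
    phi B par β (wbr par v v') = B.br (∑ i, v i • β i) (∑ j, v' j • β j) := by
  have hR : B.br (∑ i, v i • β i) (∑ j, v' j • β j)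
      = ∑ i, ∑ j, (v i * v' j) • B.br (β i) (β j) := by
    simp only [map_sum, LinearMap.sum_apply, map_smul, LinearMap.smul_apply, smul_smul,
      Finset.smul_sum]
    rw [Finset.sum_comm]
    refine Finset.sum_congr rfl fun i _ => Finset.sum_congr rfl fun j _ => ?_
    rw [mul_comm]
  have h1 : phi B par β (wbr par v v') = ∑ i, ∑ j, (2⁻¹ * (v i * v' j)) • B.br (β i) (β j)
      + ∑ i, ∑ j, (2⁻¹ * (v j * v' i)) • B.br (β j) (β i) := by
    show ∑ i, ∑ j, _ = _
    simp only [← Finset.sum_add_distrib]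
    refine Finset.sum_congr rfl fun i _ => Finset.sum_congr rfl fun j _ => ?_
    rw [wbr_apply, skew_par B _ _ _ _ (hβ j) (hβ i), sg_comm (par j) (par i), mul_sub, sub_smul,
      sub_eq_add_neg, smul_neg, smul_smul]
    congr 3; ring
  rw [h1, hR, Finset.sum_comm (f := fun i j => (2⁻¹ * (v j * v' i)) • B.br (β j) (β i))]
  simp only [← Finset.sum_add_distrib]
  refine Finset.sum_congr rfl fun i _ => Finset.sum_congr rfl fun j _ => ?_
  rw [← add_smul]; congr 1; field_simp; ring

def freeJ (par : ι → Bool) : ((ι → K) × WW K par) →ₗ[K] ((ι → K) × WW K par) where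
  toFun := fun p => (fun i => (if par i then -1 else 1) * p.1 i,
    ⟨fun i j => (if par i then -1 else 1) * (if par j then -1 else 1) * p.2.1 i j, by
      intro i j; show _ * _ = -(_ * (_ * _)); rw [WW_mem par p.2 i j]; ring⟩)
  map_add' := by
    intro a b; ext <;> simp [mul_add]
  map_smul' := by
    intro a b; ext <;> simp

lemma freeJ_fst (par : ι → Bool) (p : (ι → K) × WW K par) (i : ι) :
    (freeJ par p).1 i = (if par i then -1 else 1) * p.1 i := rfl

lemma freeJ_snd (par : ι → Bool) (p : (ι → K) × WW K par) (i j : ι) :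
    (freeJ par p).2.1 i j =
      (if par i then -1 else 1) * (if par j then -1 else 1) * p.2.1 i j := rfl

def freeBr (par : ι → Bool) : ((ι → K) × WW K par) →ₗ[K] ((ι → K) × WW K par) →ₗ[K]
    ((ι → K) × WW K par) := LinearMap.mk₂ K (fun p q => (0, wbr par p.1 q.1))
    (by intros; simp) (by intros; simp) (by intros; simp) (by intros; simp)

lemma freeBr_apply (par : ι → Bool) (p q : (ι → K) × WW K par) :
    freeBr par p q = (0, wbr par p.1 q.1) := rfl

/-- the free two-step nilpotent superalgebra -/
def freeTwo (h2 : (2 : K) ≠ 0) (par : ι → Bool) : SuperLie K where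
  carrier := (ι → K) × WW K par
  J := freeJ par
  br := freeBr par
  J_inv := by
    intro x
    ext i
    · simp only [freeJ_fst]; split_ifs <;> simp
    · simp only [freeJ_snd]; split_ifs <;> simp
  J_br := by
    intro x y
    ext i j
    · simp [freeJ_fst, freeBr_apply]
    · simp only [freeJ_snd, freeJ_fst, freeBr_apply, wbr_apply]; ring
  skew_e := by
    intro x y hx
    have hx' : ∀ i, par i = true → x.1 i = 0 := by
      intro i hi
      have := congrFun (congrArg Prod.fst hx) i
      simp [hi, freeJ_fst] at this
      have h : (2 : K) * x.1 i = 0 := by linear_combination -this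
      exact (mul_eq_zero.mp h).resolve_left h2
    ext i j
    · simp [freeBr_apply]
    · simp only [freeBr_apply, Prod.snd_neg, NegMemClass.coe_neg, Pi.neg_apply, wbr_apply]
      cases hi : par i <;> cases hj : par j <;> simp [sg] <;> try ring
      rw [hx' i hi, hx' j hj]; ring
  skew_o := by
    intro x y hx hy
    have hh : ∀ x : (ι → K) × WW K par,
       (fun i => (if par i then -1 else 1) * x.1 i) = -x.1 → ∀ i, par i = false → x.1 i = 0 := by
      intro x hx i hi
      have := congrFun hx i
      simp [hi] at this
      have h : (2 : K) * x.1 i = 0 := by linear_combination this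
      exact (mul_eq_zero.mp h).resolve_left h2
    have hx' := hh x (congrArg Prod.fst hx)
    have hy' := hh y (congrArg Prod.fst hy)
    ext i j
    · simp [freeBr_apply]
    · simp only [freeBr_apply, wbr_apply]
      cases hi : par i <;> cases hj : par j <;> simp [sg]
      · rw [hx' i hi, hx' j hj, hy' i hi, hy' j hj]
      · rw [hx' i hi, hy' i hi]; ring
      · rw [hx' j hj, hy' j hj]; ring
      · ring
  jacobi := by
    intro a b c x y z _ _ _
    simp [freeBr_apply]

lemma stem_free [Fintype ι] [DecidableEq ι] (h2 : (2 : K) ≠ 0) (A : SuperLie K) (par : ι → Bool)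
    (b : ι → A.carrier) (z : A.carrier) (ω : ι → ι → K)
    (hb : ∀ i, A.J (b i) = if par i then -b i else b i) (hz : A.J z = z)
    (hli : LinearIndependent K (Sum.elim b (fun _ : Fin 1 => z)))
    (hsp : Submodule.span K (Set.range (Sum.elim b (fun _ : Fin 1 => z))) = ⊤)
    (hω : ∀ i j, A.br (b i) (b j) = ω i j • z) (hzc : z ∈ A.center)
    (hne : ∃ i j, ω i j ≠ 0) :
    ∃ (B : SuperLie K) (f : Hom B A),
    Surjective f.toLin ∧
    LinearMap.ker f.toLin ≤ B.center ⊓ B.derived ∧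
    finrank K (LinearMap.ker f.toLin) = finrank K (WW K par) - 1 := by
  rw [mem_center_iff] at hzc
  have hphi : ∀ w, ∃ c : K, phi A par b w = c • z := by
    intro w
    refine ⟨∑ i, ∑ j, 2⁻¹ * w.1 i j * ω i j, ?_⟩
    show ∑ i, ∑ j, _ = _
    simp only [hω, smul_smul, Finset.sum_smul]
  let F : (ι → K) × WW K par →ₗ[K] A.carrier :=
    (Fintype.linearCombination K b).coprod (phi A par b)
  have hF : ∀ p, F p = ∑ i, p.1 i • b i + phi A par b p.2 := by
    intro p; simp [F, Fintype.linearCombination_apply]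
  have hsurj : Surjective F := by
    rw [← LinearMap.range_eq_top, eq_top_iff, ← hsp, Submodule.span_le]
    have hb' : ∀ i, F (Pi.single i 1, 0) = b i := by
      intro i
      rw [hF]; simp [Pi.single_apply]
    rintro _ ⟨i | i, rfl⟩
    · exact ⟨_, hb' i⟩
    · obtain ⟨i, j, hij⟩ := hne
      refine ⟨(0, (ω i j)⁻¹ • wbr par (Pi.single i 1) (Pi.single j 1)), ?_⟩
      rw [hF]
      simp only [map_smul, phi_wbr h2 A par b hb]
      simp [Pi.single_apply, hω, smul_smul, hij]
  have HJ : ∀ p, F (freeJ par p) = A.J (F p) := by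
    intro p
    rw [hF, hF]
    obtain ⟨c, hc⟩ := hphi p.2
    rw [map_add, hc, map_smul, hz, ← hc, map_sum]
    congr 1
    · refine Finset.sum_congr rfl fun i _ => ?_
      rw [map_smul, hb]
      rw [freeJ_fst]
      split_ifs <;> simp
    · show ∑ i, ∑ j, _ = ∑ i, ∑ j, _
      refine Finset.sum_congr rfl fun i _ => Finset.sum_congr rfl fun j _ => ?_
      have h := A.J_br (b i) (b j)
      rw [hω, map_smul, hz, ← hω, hb, hb] at h
      rw [freeJ_snd]
      split_ifs at h ⊢ with h1 h3 h3
      · simp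
      · simp at h
        simp; rw [← smul_neg, ← h]
      · simp at h
        simp; rw [← smul_neg, ← h]
      · simp
  have HB : ∀ p q, F (freeBr par p q) = A.br (F p) (F q) := by
    intro p q
    rw [hF, hF, hF]
    show ∑ i, (0 : ι → K) i • b i + phi A par b (wbr par p.1 q.1) = _
    obtain ⟨c, hc⟩ := hphi p.2
    obtain ⟨d, hd⟩ := hphi q.2
    rw [phi_wbr h2 A par b hb, hc, hd]
    simp only [map_add, LinearMap.add_apply, map_smul, LinearMap.smul_apply, hzc,
      br_right_zero h2 A hzc]
    simp
  have HK : ∀ p : (ι → K) × WW K par, F p = 0 → p ∈ (freeTwo h2 par).center ⊓ (freeTwo h2 par).derived := by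
    intro p hp0
    rw [hF] at hp0
    obtain ⟨c, hc⟩ := hphi p.2
    rw [hc] at hp0
    have hv : p.1 = 0 := by
      have := Fintype.linearIndependent_iff.mp hli (Sum.elim p.1 (fun _ => c))
        (by simpa using hp0)
      ext i
      exact this (Sum.inl i)
    constructor
    · show p ∈ (freeTwo h2 par).center
      refine (mem_center_iff (freeTwo h2 par) p).mpr ?_
      intro q
      have : ∀ q : (ι → K) × WW K par, freeBr par p q = 0 := by
        intro q; rw [freeBr_apply, hv]; simp
      exact this q
    · have he : p = ∑ i, ∑ j, (2⁻¹ * p.2.1 i j) •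
          freeBr par (Pi.single i 1, 0) (Pi.single j 1, 0) := by
        simp only [freeBr_apply]
        refine Prod.ext ?_ ?_
        · rw [hv]
          simp [Prod.fst_sum]
        · simp only [Prod.snd_sum, Prod.smul_snd]
          ext k l
          simp only [AddSubmonoidClass.coe_finsetSum, Finset.sum_apply, Submodule.coe_smul,
            Pi.smul_apply, wbr_apply, smul_eq_mul, mul_sub, Finset.sum_sub_distrib]
          simp only [Pi.single_apply]
          simp
          rw [WW_mem par p.2 l k, sg_comm (par l) (par k)]
          have := sg_sq (K := K) (par k) (par l)
          have h4 := inv_mul_cancel₀ h2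
          linear_combination (-(2⁻¹ * p.2.1 k l)) * this - (p.2.1 k l) * h4
      rw [he]
      have hm : ∀ u v : (ι → K) × WW K par, freeBr par u v ∈ (freeTwo h2 par).derived :=
        fun u v => Submodule.subset_span ⟨u, v, rfl⟩
      exact (freeTwo h2 par).derived.sum_mem fun i _ => (freeTwo h2 par).derived.sum_mem
        fun j _ => Submodule.smul_mem _ _ (hm _ _)
  refine ⟨freeTwo h2 par, ⟨F, HJ, HB⟩, hsurj, fun p hp => HK p hp, ?_⟩
  · have h1 := LinearMap.finrank_range_add_finrank_ker F
    rw [LinearMap.range_eq_top.mpr hsurj, finrank_top, Module.finrank_prod, Module.finrank_pi] at h1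
    have h3 : finrank K A.carrier = Fintype.card ι + 1 := by
      rw [Module.finrank_eq_card_basis (Basis.mk hli hsp.ge)]
      simp
    show finrank K (LinearMap.ker F) = _
    omega

lemma upper_gen [Fintype ι] (h2 : (2 : K) ≠ 0) (h3 : (3 : K) ≠ 0) (A : SuperLie K) (par : ι → Bool)
    (b : ι → A.carrier) (z : A.carrier) (ω : ι → ι → K)
    (hb : ∀ i, A.J (b i) = if par i then -b i else b i) (hz : A.J z = z) (hz0 : z ≠ 0)
    (hsp : Submodule.span K (Set.range (Sum.elim b (fun _ : Fin 1 => z))) = ⊤)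
    (hω : ∀ i j, A.br (b i) (b j) = ω i j • z)
    (hne : ∃ i j, ω i j ≠ 0)
    (hk : ∀ k, (∃ i j, ω i j ≠ 0 ∧ ω j k = 0 ∧ ω k i = 0) ∨ (par k = true ∧ ω k k ≠ 0))
    (B : SuperLie K) (f : Hom B A) (hf : Surjective f.toLin)
    (hker : LinearMap.ker f.toLin ≤ B.center ⊓ B.derived) :
    finrank K (LinearMap.ker f.toLin) ≤ finrank K (WW K par) - 1 := by
  classical
  choose β hβ hβJ using fun i => exists_lift h2 f hf (par i) (b i) (hb i)
  obtain ⟨ζ, hζ, hζJ⟩ := exists_lift h2 f hf false z (by simpa using hz)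
  simp only [Bool.false_eq_true, if_false] at hζJ
  have hkc : ∀ t, f.toLin t = 0 → ∀ x, B.br x t = 0 := fun t ht =>
    br_right_zero h2 B ((mem_center_iff B t).mp (hker (show t ∈ LinearMap.ker f.toLin from ht)).1)
  have hfb : ∀ i j, f.toLin (B.br (β i) (β j)) = ω i j • z := by
    intro i j; rw [f.map_br, hβ, hβ, hω]
  have hz1 : ∀ i j x, B.br x (B.br (β i) (β j)) = ω i j • B.br x ζ := by
    intro i j x
    have := hkc (B.br (β i) (β j) - ω i j • ζ) (by rw [map_sub, map_smul, hζ, hfb, sub_self]) x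
    rwa [map_sub, map_smul, sub_eq_zero] at this
  have hbz : ∀ k, B.br (β k) ζ = 0 := by
    intro k
    rcases hk k with ⟨i, j, hij, hjk, hki⟩ | ⟨hp, hkk⟩
    · have := B.jacobi (par i) (par j) (par k) (β i) (β j) (β k) (hβJ i) (hβJ j) (hβJ k)
      rw [hz1, hz1, hz1, hjk, hki] at this
      simp only [zero_smul, smul_zero, zero_add, smul_smul] at this
      rcases smul_eq_zero.mp this with h | h
      · exfalso
        rcases mul_eq_zero.mp h with h | h
        · split_ifs at h <;> simp at h
        · exact hij h
      · exact h
    · have := B.jacobi true true true (β k) (β k) (β k) (by simpa [hp] using hβJ k)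
        (by simpa [hp] using hβJ k) (by simpa [hp] using hβJ k)
      rw [hz1] at this
      simp only [Bool.and_self, if_true, smul_smul, ← add_smul] at this
      refine (smul_eq_zero.mp this).resolve_left ?_
      have : -1 * ω k k + -1 * ω k k + -1 * ω k k = -(3 * ω k k) := by ring
      rw [this]
      exact neg_ne_zero.mpr (mul_ne_zero h3 hkk)
  have hzb : ∀ k, B.br ζ (β k) = 0 := by
    intro k; rw [B.skew_e _ _ hζJ, hbz, neg_zero]
  have hzz : B.br ζ ζ = 0 := by
    have := B.skew_e ζ ζ hζJ
    have h : (2 : K) • B.br ζ ζ = 0 := by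
      rw [two_smul]; nth_rewrite 1 [this]; simp
    exact (smul_eq_zero.mp h).resolve_left h2
  have hbb : ∀ i j, B.br (β i) (β j) ∈ LinearMap.range (phi B par β) := by
    intro i j
    refine ⟨wbr par (Pi.single i 1) (Pi.single j 1), ?_⟩
    rw [phi_wbr h2 B par β hβJ]
    simp [Pi.single_apply]
  have hD : B.derived ≤ LinearMap.range (phi B par β) := by
    refine derived_le h2 f (hker.trans inf_le_left) (Sum.elim β (fun _ : Fin 1 => ζ)) ?_ _ ?_
    · rw [← hsp]
      congr 2
      ext i
      rcases i with i | i <;> simp [hβ, hζ]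
    · rintro (i | i) (j | j)
      · exact hbb i j
      · simp [hbz]
      · simp [hzb]
      · simp [hzz]
  obtain ⟨i, j, hij⟩ := hne
  have h4 := finrank_ker_lt f _ ((hker.trans inf_le_right).trans hD) _ (hbb i j)
    (by rw [hfb]; exact smul_ne_zero hij hz0)
  have h5 := LinearMap.finrank_range_le (phi B par β)
  omega

lemma multDim_gen [Fintype ι] (h2 : (2 : K) ≠ 0) (h3 : (3 : K) ≠ 0) (A : SuperLie K) (par : ι → Bool)
    (b : ι → A.carrier) (z : A.carrier) (ω : ι → ι → K)
    (hb : ∀ i, A.J (b i) = if par i then -b i else b i) (hz : A.J z = z) 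
    (hli : LinearIndependent K (Sum.elim b (fun _ : Fin 1 => z)))
    (hsp : Submodule.span K (Set.range (Sum.elim b (fun _ : Fin 1 => z))) = ⊤)
    (hω : ∀ i j, A.br (b i) (b j) = ω i j • z) (hzc : z ∈ A.center)
    (hne : ∃ i j, ω i j ≠ 0)
    (hk : ∀ k, (∃ i j, ω i j ≠ 0 ∧ ω j k = 0 ∧ ω k i = 0) ∨ (par k = true ∧ ω k k ≠ 0)) :
    A.multDim = finrank K (WW K par) - 1 := by
  classical
  refine IsGreatest.csSup_eq ⟨stem_free h2 A par b z ω hb hz hli hsp hω hzc hne, ?_⟩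
  rintro _ ⟨B, f, hf, hker, rfl⟩
  exact upper_gen h2 h3 A par b z ω hb hz (hli.ne_zero (Sum.inr 0)) hsp hω hne hk B f hf hker

lemma finrank_WW [Fintype ι] (h2 : (2 : K) ≠ 0) (par : ι → Bool) :
    2 * finrank K (WW K par) + Fintype.card ι =
      Fintype.card ι ^ 2 + 2 * Fintype.card {i // par i = true} := by
  classical
  let _ : LinearOrder ι := LinearOrder.lift' (Fintype.equivFin ι) (Fintype.equivFin ι).injective
  let e : WW K par →ₗ[K] ({p : ι × ι // p.1 < p.2} → K) × ({i // par i = true} → K) :=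
    { toFun := fun w => (fun p => w.1 p.1.1 p.1.2, fun i => w.1 i.1 i.1)
      map_add' := by intros; rfl
      map_smul' := by intros; rfl }
  have hinj : Injective e := by
    rw [← LinearMap.ker_eq_bot, LinearMap.ker_eq_bot']
    intro w hw
    have h1 : ∀ i j, i < j → w.1 i j = 0 := fun i j hij =>
      congrFun (congrArg Prod.fst hw) ⟨(i, j), hij⟩
    have h3 : ∀ i, par i = true → w.1 i i = 0 := fun i hi =>
      congrFun (congrArg Prod.snd hw) ⟨i, hi⟩
    ext i j
    show w.1 i j = 0
    rcases lt_trichotomy i j with h | h | h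
    · exact h1 _ _ h
    · subst h
      cases hi : par i
      · have := WW_mem par w i i
        simp [sg, hi] at this
        have h : (2 : K) * w.1 i i = 0 := by linear_combination this
        exact (mul_eq_zero.mp h).resolve_left h2
      · exact h3 _ hi
    · rw [WW_mem, h1 _ _ h]; simp
  have hsurj : Surjective e := by
    rintro ⟨g, d⟩
    refine ⟨⟨fun i j => if h : i < j then g ⟨(i, j), h⟩ else
      if h : j < i then -(sg (par i) (par j) * g ⟨(j, i), h⟩) else
      if h : par i = true then d ⟨i, h⟩ else 0, ?_⟩, ?_⟩
    · intro i j
      rcases lt_trichotomy i j with h | h | h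
      · simp only [h, h.not_gt, dif_pos, dif_neg, not_false_eq_true]
        rw [sg_comm (par j) (par i)]
        linear_combination (-g ⟨(i, j), h⟩) * sg_sq (K := K) (par i) (par j)
      · subst h
        simp only [lt_irrefl, dif_neg, not_false_eq_true]
        by_cases hi : par i = true <;> simp [hi, sg]
      · simp only [h, h.not_gt, dif_pos, dif_neg, not_false_eq_true]
    · refine Prod.ext ?_ ?_
      · funext p; exact dif_pos p.2
      · funext i
        show dite _ _ _ = _
        simp [i.2]
  have h1 := (LinearEquiv.ofBijective e ⟨hinj, hsurj⟩).finrank_eq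
  rw [Module.finrank_prod, Module.finrank_pi, Module.finrank_pi] at h1
  rw [h1]
  have hc : 2 * Fintype.card {p : ι × ι // p.1 < p.2} + Fintype.card ι = Fintype.card ι ^ 2 := by
    let E : ({p : ι × ι // p.1 < p.2} ⊕ {p : ι × ι // p.1 < p.2}) ⊕ ι → ι × ι :=
      Sum.elim (Sum.elim (fun p => p.1) (fun p => p.1.swap)) (fun i => (i, i))
    have hE : Bijective E := by
      constructor
      · rintro ((⟨⟨a, b⟩, hp⟩ | ⟨⟨a, b⟩, hp⟩) | i) ((⟨⟨c, d⟩, hq⟩ | ⟨⟨c, d⟩, hq⟩) | j) h <;>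
          simp only [E, Sum.elim_inl, Sum.elim_inr, Prod.swap, Prod.mk.injEq] at h <;> (try dsimp only at *) <;>
          obtain ⟨h, h'⟩ := h <;> subst h <;> (try subst h') <;>
          first
          | rfl
          | (exfalso; order)
      · rintro ⟨i, j⟩
        rcases lt_trichotomy i j with h | h | h
        · exact ⟨Sum.inl (Sum.inl ⟨(i, j), h⟩), rfl⟩
        · exact ⟨Sum.inr i, by simp [E, h]⟩
        · exact ⟨Sum.inl (Sum.inr ⟨(j, i), h⟩), rfl⟩
    have := Fintype.card_of_bijective hE
    simp only [Fintype.card_sum, Fintype.card_prod] at this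
    rw [sq]; omega
  omega

def br5 : (Fin 5 → K) →ₗ[K] (Fin 5 → K) →ₗ[K] (Fin 5 → K) :=
  LinearMap.mk₂ K (fun x y => ![0, 0, x 0 * y 1 - x 1 * y 0, x 0 * y 2 - x 2 * y 0,
      x 1 * y 2 - x 2 * y 1])
    (by intros; ext i; fin_cases i <;> simp <;> ring)
    (by intros; ext i; fin_cases i <;> simp <;> ring)
    (by intros; ext i; fin_cases i <;> simp <;> ring)
    (by intros; ext i; fin_cases i <;> simp <;> ring)

lemma br5_apply (x y : Fin 5 → K) : br5 x y = ![0, 0, x 0 * y 1 - x 1 * y 0,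
    x 0 * y 2 - x 2 * y 0, x 1 * y 2 - x 2 * y 1] := rfl

/-- the stem cover of the three-dimensional Heisenberg algebra -/
def cover5 (h2 : (2 : K) ≠ 0) : SuperLie K where
  carrier := Fin 5 → K
  J := LinearMap.id
  br := br5
  J_inv := fun _ => rfl
  J_br := fun _ _ => rfl
  skew_e := by intro x y _; ext i; fin_cases i <;> simp [br5_apply] <;> ring
  skew_o := by
    intro x y hx _
    have : x = 0 := by
      have h : (2 : K) • x = 0 := by
        rw [two_smul]; nth_rewrite 1 [show x = -x from hx]; simp
      exact (smul_eq_zero.mp h).resolve_left h2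
    subst this
    simp
  jacobi := by
    have key : ∀ x : Fin 5 → K, x = -x → x = 0 := by
      intro x hx
      have h : (2 : K) • x = 0 := by
        rw [two_smul]; nth_rewrite 1 [hx]; simp
      exact (smul_eq_zero.mp h).resolve_left h2
    intro a b c x y z hx hy hz
    cases a
    · cases b
      · cases c
        · ext i; fin_cases i <;> simp [br5_apply] <;> ring
        · rw [key z hz]; simp
      · rw [key y hy]; simp
    · rw [key x hx]; simp

lemma multDim_H10 (h2 : (2 : K) ≠ 0) (A : SuperLie K) (x y z : A.carrier)
    (hx : A.J x = x) (hy : A.J y = y) (hz : A.J z = z)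
    (hli : LinearIndependent K ![x, y, z])
    (hsp : Submodule.span K (Set.range ![x, y, z]) = ⊤)
    (hxy : A.br x y = z) (hzc : z ∈ A.center) : A.multDim = 2 := by
  rw [mem_center_iff] at hzc
  have hzc' := br_right_zero h2 A hzc
  have hself : ∀ (B : SuperLie K) (t : B.carrier), B.J t = t → B.br t t = 0 := by
    intro B t ht
    have := B.skew_e t t ht
    have h : (2 : K) • B.br t t = 0 := by
      rw [two_smul]; nth_rewrite 1 [this]; simp
    exact (smul_eq_zero.mp h).resolve_left h2
  have hz0 : z ≠ 0 := hli.ne_zero 2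
  have hJ : ∀ t, A.J t = t := by
    intro t
    have ht : t ∈ Submodule.span K (Set.range ![x, y, z]) := by rw [hsp]; trivial
    have : A.J = LinearMap.id := by
      apply LinearMap.ext_on_range hsp
      intro i
      fin_cases i <;> simp [hx, hy, hz]
    rw [this]; rfl
  have hyx : A.br y x = -z := by rw [A.skew_e y x hy, hxy]
  refine IsGreatest.csSup_eq ⟨?_, ?_⟩
  · let F : (Fin 5 → K) →ₗ[K] A.carrier :=
      { toFun := fun v => v 0 • x + v 1 • y + v 2 • z
        map_add' := by intro a b; simp only [Pi.add_apply, add_smul]; abel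
        map_smul' := by intro a b; simp [smul_smul] }
    have hF : ∀ v, F v = v 0 • x + v 1 • y + v 2 • z := fun v => rfl
    have hsurj : Surjective F := by
      rw [← LinearMap.range_eq_top, eq_top_iff, ← hsp, Submodule.span_le]
      rintro _ ⟨i, rfl⟩
      fin_cases i
      · exact ⟨![1, 0, 0, 0, 0], by simp [hF]⟩
      · exact ⟨![0, 1, 0, 0, 0], by simp [hF]⟩
      · exact ⟨![0, 0, 1, 0, 0], by simp [hF]⟩
    have HB : ∀ v w, F (br5 v w) = A.br (F v) (F w) := by
      intro v w
      rw [hF, hF v, hF w]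
      simp only [map_add, LinearMap.add_apply, map_smul, LinearMap.smul_apply, hzc, hzc', hxy, hyx,
        hself A x hx, hself A y hy]
      simp [br5_apply]
      module
    have HK : ∀ v : Fin 5 → K, F v = 0 → v ∈ (cover5 h2).center ⊓ (cover5 h2).derived := by
      intro v hv0
      rw [hF] at hv0
      have hz' := Fintype.linearIndependent_iff.mp hli ![v 0, v 1, v 2]
        (by simpa [Fin.sum_univ_three] using hv0)
      have e0 : v 0 = 0 := hz' 0
      have e1 : v 1 = 0 := hz' 1
      have e2 : v 2 = 0 := hz' 2
      constructor
      · show v ∈ (cover5 h2).center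
        refine (mem_center_iff (cover5 h2) v).mpr ?_
        have : ∀ w : Fin 5 → K, br5 v w = 0 := by
          intro w
          ext i; fin_cases i <;> simp [br5_apply, e0, e1, e2]
        exact this
      · have : v = v 3 • br5 (![1, 0, 0, 0, 0] : Fin 5 → K) (![0, 0, 1, 0, 0] : Fin 5 → K)
          + v 4 • br5 (![0, 1, 0, 0, 0] : Fin 5 → K) (![0, 0, 1, 0, 0] : Fin 5 → K) := by
          ext i; fin_cases i <;> simp [br5_apply, e0, e1, e2]
        have hm : ∀ u v : Fin 5 → K, br5 u v ∈ (cover5 h2).derived :=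
          fun u v => Submodule.subset_span ⟨u, v, rfl⟩
        rw [this]
        exact (cover5 h2).derived.add_mem (Submodule.smul_mem _ _ (hm _ _))
          (Submodule.smul_mem _ _ (hm _ _))
    refine ⟨cover5 h2, ⟨F, fun v => ?_, HB⟩, hsurj, fun v hv => HK v hv, ?_⟩
    · rw [hJ]; rfl
    · have h1 := LinearMap.finrank_range_add_finrank_ker F
      rw [LinearMap.range_eq_top.mpr hsurj, finrank_top, Module.finrank_pi] at h1
      have h3 : finrank K A.carrier = 3 := by
        rw [Module.finrank_eq_card_basis (Basis.mk hli hsp.ge)]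
        simp
      show finrank K (LinearMap.ker F) = _
      simp at h1
      omega
  · rintro _ ⟨B, f, hf, hker, rfl⟩
    obtain ⟨ξ, hξ, hξJ⟩ := exists_lift h2 f hf false x (by simpa using hx)
    obtain ⟨η, hη, hηJ⟩ := exists_lift h2 f hf false y (by simpa using hy)
    obtain ⟨ζ, hζ, hζJ⟩ := exists_lift h2 f hf false z (by simpa using hz)
    simp only [Bool.false_eq_true, if_false] at hξJ hηJ hζJ
    let S : Fin 3 → B.carrier := ![B.br ξ η, B.br ξ ζ, B.br η ζ]
    let D := Submodule.span K (Set.range S)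
    have m0 : B.br ξ η ∈ D := Submodule.subset_span ⟨0, rfl⟩
    have m1 : B.br ξ ζ ∈ D := Submodule.subset_span ⟨1, rfl⟩
    have m2 : B.br η ζ ∈ D := Submodule.subset_span ⟨2, rfl⟩
    have hD : B.derived ≤ D := by
      refine derived_le h2 f (hker.trans inf_le_left) ![ξ, η, ζ] ?_ _ ?_
      · rw [← hsp]
        congr 2
        ext i
        fin_cases i <;> simp [hξ, hη, hζ]
      · intro i j
        fin_cases i <;> fin_cases j
        · simp [hself B ξ hξJ]
        · exact m0
        · exact m1
        · show B.br η ξ ∈ D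
          rw [B.skew_e _ _ hηJ]; exact D.neg_mem m0
        · simp [hself B η hηJ]
        · exact m2
        · show B.br ζ ξ ∈ D
          rw [B.skew_e _ _ hζJ]; exact D.neg_mem m1
        · show B.br ζ η ∈ D
          rw [B.skew_e _ _ hζJ]; exact D.neg_mem m2
        · simp [hself B ζ hζJ]
    have : FiniteDimensional K D := FiniteDimensional.span_of_finite K (Set.finite_range S)
    have h4 := finrank_ker_lt f D ((hker.trans inf_le_right).trans hD) _ m0
      (by rw [f.map_br, hξ, hη, hxy]; exact hz0)
    have h5 : finrank K D ≤ 3 := by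
      have := finrank_range_le_card (R := K) S
      simpa [Set.finrank] using this
    omega

end aux

end SuperLie

/-- For the special Heisenberg Lie superalgebra `H(m,n)` with even
center, `dim M(H(m,n)) = 2m² - m - 1 + 2mn + n(n+1)/2` when `m+n ≥ 2`,
`dim M(H(0,1)) = 0`, and `dim M(H(1,0)) = 2`. (The first equation is stated
multiplied by `2` in `ℤ` to avoid fractions.) -/
theorem stmt6 {K : Type} [Field K] (h2 : (2 : K) ≠ 0) (h3 : (3 : K) ≠ 0)
    (A : SuperLie K) [FiniteDimensional K A.carrier] (m n : ℕ)
    (h : A.IsHeisEven m n) :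
    (2 ≤ m + n →
      2 * (A.multDim : ℤ) = 4 * m^2 - 2 * m - 2 + 4 * m * n + n * (n + 1)) ∧
    (m = 0 → n = 1 → A.multDim = 0) ∧
    (m = 1 → n = 0 → A.multDim = 2) := by
  classical
  obtain ⟨x, y, z, hx, hy, hz, hli, hsp, hxx, hyy, hxy, hzc⟩ := h
  have hx' : ∀ i, A.J (x i) = x i := fun i => by
    have := hx i; simpa [evenPart, sub_eq_zero] using this
  have hz' : A.J z = z := by simpa [evenPart, sub_eq_zero] using hz
  have hy' : ∀ i, A.J (y i) = -y i := fun i => by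
    have := hy i; simpa [oddPart, add_eq_zero_iff_eq_neg] using this
  let par : Fin (2*m) ⊕ Fin n → Bool := Sum.elim (fun _ => false) (fun _ => true)
  let b : Fin (2*m) ⊕ Fin n → A.carrier := Sum.elim x y
  let ω : Fin (2*m) ⊕ Fin n → Fin (2*m) ⊕ Fin n → K :=
    Sum.elim (fun i => Sum.elim (fun j => if (j : ℕ) = (i : ℕ) + m then 1 else
      if (i : ℕ) = (j : ℕ) + m then -1 else 0) (fun _ => 0))
      (fun i => Sum.elim (fun _ => 0) (fun j => if i = j then 1 else 0))
  have hb : ∀ i, A.J (b i) = if par i then -b i else b i := by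
    rintro (i | i)
    · simp [b, par, hx']
    · simp [b, par, hy']
  have hω : ∀ i j, A.br (b i) (b j) = ω i j • z := by
    rintro (i | i) (j | j)
    · simp only [b, ω, Sum.elim_inl, hxx]; split_ifs <;> simp
    · simp [b, ω, hxy]
    · have := A.skew_e (x j) (y i) (hx' j)
      rw [hxy] at this
      simp [b, ω, neg_eq_zero.mp this.symm]
    · simp only [b, ω, Sum.elim_inr, hyy]; split_ifs <;> simp
  have hcomp : Sum.elim b (fun _ : Fin 1 => z) =
      Sum.elim x (Sum.elim y (fun _ : Fin 1 => z)) ∘ (Equiv.sumAssoc _ _ _) := by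
    funext i
    rcases i with (i | i) | i <;> rfl
  have hli' : LinearIndependent K (Sum.elim b (fun _ : Fin 1 => z)) := by
    rw [hcomp]; exact hli.comp _ (Equiv.injective _)
  have hsp' : Submodule.span K (Set.range (Sum.elim b (fun _ : Fin 1 => z))) = ⊤ := by
    rw [hcomp, EquivLike.range_comp]; exact hsp
  have hdim := finrank_WW h2 par
  have hcard : Fintype.card {i // par i = true} = n := by
    have hbij : Bijective (fun k : Fin n => (⟨Sum.inr k, rfl⟩ : {i // par i = true})) := by
      constructor
      · intro a c hac
        exact Sum.inr.inj (congrArg Subtype.val hac)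
      · rintro ⟨i | i, hi⟩
        · simp [par] at hi
        · exact ⟨i, rfl⟩
    rw [← Fintype.card_of_bijective hbij, Fintype.card_fin]
  rw [hcard] at hdim
  simp only [Fintype.card_sum, Fintype.card_fin] at hdim
  have hyk : ∀ k : Fin n, par (Sum.inr k) = true ∧ ω (Sum.inr k) (Sum.inr k) ≠ 0 := by
    intro k; simp [par, ω]
  have main : (2 ≤ m + n ∨ (m = 0 ∧ n = 1)) → A.multDim = finrank K (WW K par) - 1 := by
    intro hmn
    have hm1 : ∀ h : 0 < m, ω (Sum.inl ⟨0, by omega⟩) (Sum.inl ⟨m, by omega⟩) ≠ 0 := by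
      intro h; simp [ω]
    refine multDim_gen h2 h3 A par b z ω hb hz' hli' hsp' hω hzc ?_ ?_
    · rcases Nat.eq_zero_or_pos n with hn | hn
      · exact ⟨_, _, hm1 (by omega)⟩
      · exact ⟨_, _, (hyk ⟨0, hn⟩).2⟩
    · rintro (k | k)
      · left
        rcases Nat.eq_zero_or_pos n with hn | hn
        · have hk := k.2
          by_cases hk0 : (k : ℕ) = 0 ∨ (k : ℕ) = m
          · refine ⟨Sum.inl ⟨1, by omega⟩, Sum.inl ⟨m + 1, by omega⟩, ?_, ?_, ?_⟩
            · simp [ω, add_comm]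
            · simp only [ω, Sum.elim_inl]
              rw [if_neg (by omega), if_neg (by omega)]
            · simp only [ω, Sum.elim_inl]
              rw [if_neg (by omega), if_neg (by omega)]
          · refine ⟨_, _, hm1 (by omega), ?_, ?_⟩
            · simp only [ω, Sum.elim_inl]
              rw [if_neg (by omega), if_neg (by omega)]
            · simp only [ω, Sum.elim_inl]
              rw [if_neg (by omega), if_neg (by omega)]
        · exact ⟨_, _, (hyk ⟨0, hn⟩).2, rfl, rfl⟩
      · right; exact hyk k
  refine ⟨fun hmn => ?_, fun hm hn => ?_, fun hm hn => ?_⟩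
  · rw [main (Or.inl hmn)]
    have hpos : 1 ≤ finrank K (WW K par) := by
      by_contra hcon
      have h0 : finrank K (WW K par) = 0 := by omega
      rw [h0] at hdim
      nlinarith
    have hd : (2 * (finrank K (WW K par)) + (2 * m + n) : ℤ) = (2 * m + n)^2 + 2 * n := by
      exact_mod_cast hdim
    push_cast [Nat.cast_sub hpos]
    linarith
  · rw [main (Or.inr ⟨hm, hn⟩)]
    subst hm hn
    norm_num at hdim
    omega
  · subst hm hn
    have hc3 : ![x 0, x 1, z] = Sum.elim x (Sum.elim y (fun _ : Fin 1 => z)) ∘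
        ![Sum.inl 0, Sum.inl 1, Sum.inr (Sum.inr 0)] := by
      funext i; fin_cases i <;> rfl
    refine multDim_H10 h2 A (x 0) (x 1) z (hx' 0) (hx' 1) hz' ?_ ?_ ?_ hzc
    · rw [hc3]
      refine hli.comp _ ?_
      intro i j hij
      fin_cases i <;> fin_cases j <;> first | rfl | simp at hij
    · rw [eq_top_iff, ← hsp, Submodule.span_le]
      rintro _ ⟨i | i | i, rfl⟩
      · apply Submodule.subset_span
        have hi : i = (0 : Fin 2) ∨ i = (1 : Fin 2) := by
          have := i.2
          rcases i with ⟨i, hi⟩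
          interval_cases i
          · left; rfl
          · right; rfl
        rcases hi with rfl | rfl
        · exact ⟨0, rfl⟩
        · exact ⟨1, rfl⟩
      · exact i.elim0
      · exact Submodule.subset_span ⟨2, rfl⟩
    · rw [hxx]; simp
end

section
/- Let L be a nilpotent Lie superalgebra of dimension (4 | 0) with dim Z(L) = 1 and dim L' = 2, over a field of characteristic ≠ 2,3. Then L ≅ L_{4,0}, the Lie algebra with basis x, y, z, w and nonzero brackets [x,y] = z, [y,z] = w. -/
open Module Function TensorProduct

open SuperLie
namespace SuperLie

variable {K : Type} [Field K]

lemma aux_mem_center (A : SuperLie K) (z : A.carrier) :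
    z ∈ A.center ↔ ∀ y, A.br z y = 0 := by
  simp [center]

lemma aux_lcs_succ_le (A : SuperLie K) (k : ℕ) : A.lcs (k + 1) ≤ A.lcs k := by
  induction k with
  | zero => exact le_top
  | succ k ih =>
    apply Submodule.span_mono
    rintro z ⟨x, hx, y, rfl⟩
    exact ⟨x, ih hx, y, rfl⟩

lemma aux_lcs_anti (A : SuperLie K) : Antitone A.lcs :=
  antitone_nat_of_succ_le (aux_lcs_succ_le A)

lemma aux_lcs_stable (A : SuperLie K) (hnil : A.IsNilpotent) (k : ℕ)
    (h : A.lcs (k + 1) = A.lcs k) : A.lcs k = ⊥ := by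
  have key : ∀ m, A.lcs (k + m) = A.lcs k := by
    intro m
    induction m with
    | zero => rfl
    | succ m ih =>
      have e : A.lcs (k + m + 1) = A.lcs (k + 1) := by
        simp only [lcs, ih]
      rw [← add_assoc, e, h]
  obtain ⟨n, hn⟩ := hnil
  rw [← key n, eq_bot_iff, ← hn]
  exact aux_lcs_anti A (Nat.le_add_left n k)

lemma aux_br_mem (A : SuperLie K) (k : ℕ) {x : A.carrier} (hx : x ∈ A.lcs k) (y : A.carrier) :
    A.br x y ∈ A.lcs (k + 1) :=
  Submodule.subset_span ⟨x, hx, y, rfl⟩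

lemma aux_derived (A : SuperLie K) : A.derived = A.lcs 1 := by
  simp [derived, lcs]

end SuperLie

/-- A nilpotent Lie superalgebra of dimension `(4|0)` with
`dim Z(L) = 1` and `dim L' = 2` is isomorphic to `L_{4,0}`. -/
theorem stmt13 {K : Type} [Field K] (h2 : (2 : K) ≠ 0) (h3 : (3 : K) ≠ 0)
    (A : SuperLie K) [FiniteDimensional K A.carrier] (hnil : A.IsNilpotent)
    (hm : finrank K A.evenPart = 4) (hn : finrank K A.oddPart = 0)
    (hz : finrank K A.center = 1) (hd : finrank K A.derived = 2) :
    A.IsL40 := by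
  classical
  -- purely even
  have hodd : A.oddPart = ⊥ := Submodule.finrank_eq_zero.mp hn
  have hJ : ∀ x, A.J x = x := by
    intro x
    have : A.J x - x ∈ A.oddPart := by
      simp [oddPart, A.J_inv]
    rw [hodd, Submodule.mem_bot] at this
    exact sub_eq_zero.mp this
  have hev : ∀ x, x ∈ A.evenPart := by
    intro x
    simp [evenPart, hJ]
  have hdim : finrank K A.carrier = 4 := by
    rw [← hm, (Submodule.eq_top_iff'.mpr hev : A.evenPart = ⊤), finrank_top]
  have skew : ∀ x y, A.br x y = - A.br y x := fun x y => A.skew_e x y (hJ x)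
  have self : ∀ x, A.br x x = 0 := by
    intro x
    have h : (2 : K) • A.br x x = 0 := by
      rw [two_smul]
      nth_rewrite 1 [skew x x]
      simp
    exact (smul_eq_zero.mp h).resolve_left h2
  -- lower central series
  have hD : finrank K (A.lcs 1) = 2 := by rw [← aux_derived]; exact hd
  have hE2 : A.lcs 2 ≠ A.lcs 1 := by
    intro h
    have := aux_lcs_stable A hnil 1 h
    rw [this] at hD
    simp at hD
  have hElt : finrank K (A.lcs 2) < 2 := by
    have := Submodule.finrank_lt_finrank_of_lt (lt_of_le_of_ne (aux_lcs_succ_le A 1) hE2)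
    exact lt_of_lt_of_eq this hD
  have hEne : A.lcs 2 ≠ ⊥ := by
    intro h
    have hle : A.lcs 1 ≤ A.center := by
      intro x hx
      rw [aux_mem_center]
      intro y
      have := aux_br_mem A 1 hx y
      rwa [show 1 + 1 = 2 from rfl, h, Submodule.mem_bot] at this
    have := Submodule.finrank_mono hle
    omega
  have hE : finrank K (A.lcs 2) = 1 := by
    have : finrank K (A.lcs 2) ≠ 0 := fun h => hEne (Submodule.finrank_eq_zero.mp h)
    omega
  have h3b : A.lcs 3 = ⊥ := by
    have hne : A.lcs 3 ≠ A.lcs 2 := fun h => hEne (aux_lcs_stable A hnil 2 h)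
    have hlt : finrank K (A.lcs 3) < finrank K (A.lcs 2) := Submodule.finrank_lt_finrank_of_lt
      (lt_of_le_of_ne (aux_lcs_succ_le A 2) hne)
    apply Submodule.finrank_eq_zero.mp
    omega
  have hEZ : A.lcs 2 = A.center := by
    apply Submodule.eq_of_le_of_finrank_eq
    · intro x hx
      rw [aux_mem_center]
      intro y
      have := aux_br_mem A 2 hx y
      rwa [show 2 + 1 = 3 from rfl, h3b, Submodule.mem_bot] at this
    · rw [hE, hz]
  have hDZ : ∀ q ∈ A.lcs 1, ∀ p, A.br p q ∈ A.center := by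
    intro q hq p
    rw [skew, ← hEZ]
    exact neg_mem (aux_br_mem A 1 hq p)
  have hZr : ∀ q ∈ A.center, ∀ p, A.br p q = 0 := by
    intro q hq p
    rw [skew, (aux_mem_center A q).mp hq p, neg_zero]
  have hZD : A.center ≤ A.lcs 1 := hEZ ▸ aux_lcs_succ_le A 1
  have hbrD : ∀ p q, A.br p q ∈ A.lcs 1 := fun p q => aux_br_mem A 0 trivial q
  -- generator of the center
  obtain ⟨w0, hw0, hw0ne⟩ := A.center.exists_mem_ne_zero_of_ne_bot
    (by rw [← hEZ]; exact hEne)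
  have hZspan : ∀ v ∈ A.center, ∃ c : K, c • w0 = v := by
    intro v hv
    obtain ⟨c, hc⟩ := (finrank_eq_one_iff_of_nonzero' (⟨w0, hw0⟩ : A.center)
      (by simpa using hw0ne)).mp hz ⟨v, hv⟩
    exact ⟨c, by simpa using congrArg Subtype.val hc⟩
  -- an element of the derived algebra outside the center
  obtain ⟨z0, hz0, hz0Z⟩ : ∃ z0 ∈ A.lcs 1, z0 ∉ A.center := by
    by_contra! h
    have := Submodule.finrank_mono (show A.lcs 1 ≤ A.center from h)
    omega
  obtain ⟨y, hy⟩ : ∃ y, A.br y z0 ≠ 0 := by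
    by_contra! h
    apply hz0Z
    rw [aux_mem_center]
    intro p
    rw [skew, h, neg_zero]
  -- D = span z0 w0
  have hDspan : A.lcs 1 = Submodule.span K {z0, w0} := by
    symm
    apply Submodule.eq_of_le_of_finrank_eq
    · rw [Submodule.span_le]
      rintro v (rfl | rfl)
      · exact hz0
      · exact hZD hw0
    · rw [hD]
      have hli : LinearIndependent K ![z0, w0] := by
        rw [LinearIndependent.pair_iff]
        intro s t hst
        have hs : s = 0 := by
          have := congrArg (A.br y) hst
          simp [hZr w0 hw0, hy] at this
          exact this
        subst hs
        simpa [hw0ne] using hst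
      have := finrank_span_eq_card hli
      rw [Matrix.range_cons, Matrix.range_cons, Matrix.range_empty, Set.union_empty,
        Set.singleton_union] at this
      simpa using this
  have hDD : ∀ p ∈ A.lcs 1, A.br p z0 = 0 := by
    intro p hp
    rw [hDspan, Submodule.mem_span_pair] at hp
    obtain ⟨a, b, rfl⟩ := hp
    simp [self, (aux_mem_center A w0).mp hw0]
  -- the centralizer of z0
  let f := A.br.flip z0
  have hfr : finrank K (LinearMap.range f) ≤ 1 := by
    rw [← hz]
    apply Submodule.finrank_mono
    rintro _ ⟨p, rfl⟩
    exact hDZ z0 hz0 p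
  have hker : 3 ≤ finrank K (LinearMap.ker f) := by
    have := LinearMap.finrank_range_add_finrank_ker f
    omega
  obtain ⟨x, hx, hxD⟩ : ∃ x ∈ LinearMap.ker f, x ∉ A.lcs 1 := by
    by_contra! h
    have := Submodule.finrank_mono (show LinearMap.ker f ≤ A.lcs 1 from h)
    omega
  have hxz : A.br x z0 = 0 := hx
  -- general independence
  have indep : ∀ z w, z ∈ A.lcs 1 → A.br y z ≠ 0 → w ∈ A.center → w ≠ 0 →
      LinearIndependent K ![x, y, z, w] := by
    intro z w hzD hyz hwZ hw
    rw [Fintype.linearIndependent_iff]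
    intro g hg
    simp [Fin.sum_univ_four] at hg
    have h1 : g 1 = 0 := by
      have := congrArg f hg
      simp only [map_add, map_smul, map_zero] at this
      simpa [f, hxz, hDD z hzD, (aux_mem_center A w).mp hwZ, hy] using this
    have h0 : g 0 = 0 := by
      by_contra h0
      apply hxD
      have e : g 0 • x = -(g 2 • z + g 3 • w) := by
        rw [h1] at hg
        rw [eq_neg_iff_add_eq_zero, ← hg]
        module
      rw [← Submodule.smul_mem_iff _ h0, e]
      exact neg_mem (add_mem (Submodule.smul_mem _ _ hzD)
        (Submodule.smul_mem _ _ (hZD hwZ)))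
    rw [h0, h1] at hg
    simp only [zero_smul, zero_add] at hg
    have h2' : g 2 = 0 := by
      have := congrArg (A.br y) hg
      simpa [hZr w hwZ, hyz] using this
    have h3' : g 3 = 0 := by
      simpa [h2', hw] using hg
    intro i
    fin_cases i <;> assumption
  have spanning : ∀ z w, LinearIndependent K ![x, y, z, w] →
      Submodule.span K ({x, y, z, w} : Set A.carrier) = ⊤ := by
    intro z w h
    have := h.span_eq_top_of_card_eq_finrank (by simp [hdim])
    rw [← this]
    congr 1
    simp [Matrix.range_cons]
    ext v
    simp
    tauto
  have hzZ : A.br x y ∉ A.center := by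
    intro hc
    have hs := spanning z0 w0 (indep z0 w0 hz0 hy hw0 hw0ne)
    have gen : ∀ p, (∀ q ∈ ({x, y, z0, w0} : Set A.carrier), A.br p q ∈ A.center) →
        ∀ q, A.br p q ∈ A.center := by
      intro p hp q
      have hle : Submodule.span K ({x, y, z0, w0} : Set A.carrier) ≤
          A.center.comap (A.br p) := Submodule.span_le.mpr hp
      rw [hs] at hle
      exact hle (Submodule.mem_top)
    have hc' : A.br y x ∈ A.center := by rw [skew]; exact neg_mem hc
    have hxall : ∀ q, A.br x q ∈ A.center := by
      apply gen
      rintro q (rfl | rfl | rfl | rfl)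
      · rw [self]; exact zero_mem _
      · exact hc
      · exact hDZ _ hz0 _
      · exact hDZ _ (hZD hw0) _
    have hyall : ∀ q, A.br y q ∈ A.center := by
      apply gen
      rintro q (rfl | rfl | rfl | rfl)
      · exact hc'
      · rw [self]; exact zero_mem _
      · exact hDZ _ hz0 _
      · exact hDZ _ (hZD hw0) _
    have hall : ∀ p q, A.br p q ∈ A.center := by
      intro p
      apply gen
      rintro q (rfl | rfl | rfl | rfl)
      · rw [skew]; exact neg_mem (hxall p)
      · rw [skew]; exact neg_mem (hyall p)
      · exact hDZ _ hz0 _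
      · exact hDZ _ (hZD hw0) _
    have hle : A.derived ≤ A.center := by
      apply Submodule.span_le.mpr
      rintro _ ⟨p, q, rfl⟩
      exact hall p q
    have := Submodule.finrank_mono hle
    omega
  have hzform := hbrD x y
  rw [hDspan, Submodule.mem_span_pair] at hzform
  obtain ⟨a, b, hab⟩ := hzform
  have ha : a ≠ 0 := by
    rintro rfl
    apply hzZ
    rw [← hab, zero_smul, zero_add]
    exact Submodule.smul_mem _ _ hw0
  have hyz : A.br y (A.br x y) ≠ 0 := by
    rw [← hab]
    simp [hZr w0 hw0, ha, hy]
  have hwZ : A.br y (A.br x y) ∈ A.center := hDZ _ (hbrD x y) y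
  have hli := indep _ _ (hbrD x y) hyz hwZ hyz
  refine ⟨x, y, A.br x y, A.br y (A.br x y), hev _, hev _, hev _, hev _, hli,
    spanning _ _ hli, rfl, rfl, ?_, hZr _ hwZ _, hZr _ hwZ _, hZr _ hwZ _⟩
  rw [← hab]
  simp [hxz, hZr w0 hw0]
end
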